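/- Let A be an n×n matrix with entries in ℝ ∪ {-∞} such that every entry of the max-plus Kleene star A* is a real number (finite). Then a vector x with entries in ℝ ∪ {-∞} satisfies A ⊗ x ≤ x if and only if x lies in the image of A*, i.e. if and only if there exists a vector y with entries in ℝ ∪ {-∞} such that x = A* ⊗ y. -/

import Mathlib

/-!
Because `-∞` is absorbing, each translation `c + ·` of `EReal`, including the one by `c = +∞`,
preserves arbitrary suprema. So `x ↦ A ⊗ x` preserves suprema, `A^k ⊗ x` is its `k`-th iterate,
and `A* ⊗ y = ⨆ k, A^k ⊗ y`. Applying `A` to this supremum drops its term `k = 0`, whence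
`A ⊗ (A* ⊗ y) ≤ A* ⊗ y`. Conversely, if `A ⊗ x ≤ x`, all iterates `A^k ⊗ x` are at most `x`, and
the one with `k = 0` is `x` itself, so `x = A* ⊗ x`.
-/

noncomputable section

/-- Max-plus matrix product over the extended reals (`-∞` is absorbing for `+` in `EReal`). -/
def mpMul {m n p : ℕ} (A : Matrix (Fin m) (Fin n) EReal) (B : Matrix (Fin n) (Fin p) EReal) :
    Matrix (Fin m) (Fin p) EReal :=
  fun i j => ⨆ k, A i k + B k j

/-- Max-plus matrix-vector product. -/
def mpMulVec {m n : ℕ} (A : Matrix (Fin m) (Fin n) EReal) (x : Fin n → EReal) :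
    Fin m → EReal :=
  fun i => ⨆ k, A i k + x k

/-- Min-plus addition on `EReal`: `+∞` is absorbing. -/
def mnAdd (a b : EReal) : EReal := -((-a) + (-b))

/-- Min-plus matrix product. -/
def mnMul {m n p : ℕ} (A : Matrix (Fin m) (Fin n) EReal) (B : Matrix (Fin n) (Fin p) EReal) :
    Matrix (Fin m) (Fin p) EReal :=
  fun i j => ⨅ k, mnAdd (A i k) (B k j)

/-- Min-plus matrix-vector product. -/
def mnMulVec {m n : ℕ} (A : Matrix (Fin m) (Fin n) EReal) (x : Fin n → EReal) :
    Fin m → EReal :=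
  fun i => ⨅ k, mnAdd (A i k) (x k)

/-- Conjugate matrix: `(conj A) i j = -(A j i)`. -/
def conjM {m n : ℕ} (A : Matrix (Fin m) (Fin n) EReal) : Matrix (Fin n) (Fin m) EReal :=
  fun i j => -(A j i)

/-- Max-plus identity matrix. -/
def mpId (n : ℕ) : Matrix (Fin n) (Fin n) EReal :=
  fun i j => if i = j then 0 else ⊥

/-- Min-plus identity matrix. -/
def mnId (n : ℕ) : Matrix (Fin n) (Fin n) EReal :=
  fun i j => if i = j then 0 else ⊤

/-- Max-plus matrix powers. -/
def mpPow {n : ℕ} (A : Matrix (Fin n) (Fin n) EReal) : ℕ → Matrix (Fin n) (Fin n) EReal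
  | 0 => mpId n
  | k + 1 => mpMul A (mpPow A k)

/-- Min-plus matrix powers. -/
def mnPow {n : ℕ} (A : Matrix (Fin n) (Fin n) EReal) : ℕ → Matrix (Fin n) (Fin n) EReal
  | 0 => mnId n
  | k + 1 => mnMul A (mnPow A k)

/-- Max-plus Kleene star: entrywise supremum of all max-plus powers. -/
def mpStar {n : ℕ} (A : Matrix (Fin n) (Fin n) EReal) : Matrix (Fin n) (Fin n) EReal :=
  fun i j => ⨆ k, mpPow A k i j

/-- Min-plus star: entrywise infimum of all min-plus powers. -/
def mnStar {n : ℕ} (A : Matrix (Fin n) (Fin n) EReal) : Matrix (Fin n) (Fin n) EReal :=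
  fun i j => ⨅ k, mnPow A k i j

/-- Entrywise maximum of two matrices (`A ⊕ B`). -/
def mSup {m n : ℕ} (A B : Matrix (Fin m) (Fin n) EReal) : Matrix (Fin m) (Fin n) EReal :=
  fun i j => A i j ⊔ B i j

theorem ereal_add_iSup {ι : Sort*} (c : EReal) (f : ι → EReal) :
    c + ⨆ i, f i = ⨆ i, c + f i := by
  induction c with
  | bot => simp only [EReal.bot_add, iSup_bot]
  | coe r =>
    have gc : GaloisConnection (fun a : EReal => r + a) (fun b => b - r) := fun a b => by
      beta_reduce
      rw [EReal.le_sub_iff_add_le (.inl (EReal.coe_ne_bot r)) (.inl (EReal.coe_ne_top r)), add_comm]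
    exact gc.l_iSup
  | top =>
    by_cases hf : ∀ i, f i = ⊥
    · simp only [hf, iSup_bot, EReal.add_bot]
    · obtain ⟨i, hi⟩ := not_forall.mp hf
      have sup_ne_bot : ⨆ i, f i ≠ ⊥ := mt iSup_eq_bot.mp hf
      have sup_add_eq_top : ⨆ i, ⊤ + f i = ⊤ :=
        top_le_iff.mp (le_iSup_of_le i (EReal.top_add_of_ne_bot hi).ge)
      rw [EReal.top_add_of_ne_bot sup_ne_bot, sup_add_eq_top]

theorem ereal_iSup_add {ι : Sort*} (f : ι → EReal) (c : EReal) :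
    (⨆ i, f i) + c = ⨆ i, f i + c := by
  simp only [add_comm _ c, ereal_add_iSup]

section Action

variable {m n p : ℕ}

theorem mpMulVec_iSup {ι : Sort*} (A : Matrix (Fin m) (Fin n) EReal) (x : ι → Fin n → EReal) :
    mpMulVec A (⨆ t, x t) = ⨆ t, mpMulVec A (x t) := by
  funext i
  simp only [mpMulVec, iSup_apply, ereal_add_iSup]
  exact iSup_comm

theorem mpMulVec_mono (A : Matrix (Fin m) (Fin n) EReal) : Monotone (mpMulVec A) :=
  fun _ _ hxy _ => iSup_mono fun k => add_le_add_right (hxy k) _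

theorem mpMulVec_mpMul (A : Matrix (Fin m) (Fin n) EReal) (B : Matrix (Fin n) (Fin p) EReal)
    (x : Fin p → EReal) : mpMulVec (mpMul A B) x = mpMulVec A (mpMulVec B x) := by
  funext i
  simp only [mpMulVec, mpMul, ereal_iSup_add, ereal_add_iSup, add_assoc]
  exact iSup_comm

theorem mpMulVec_mpId (x : Fin n → EReal) : mpMulVec (mpId n) x = x := by
  funext i
  have hterm (k : Fin n) : mpId n i k + x k = ⨆ _ : i = k, x k := by
    by_cases h : i = k <;> simp [mpId, h]
  simp only [mpMulVec, hterm, iSup_iSup_eq_right]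

end Action

section KleeneStar

variable {n : ℕ} (A : Matrix (Fin n) (Fin n) EReal)

theorem mpMulVec_mpPow (k : ℕ) (x : Fin n → EReal) :
    mpMulVec (mpPow A k) x = (mpMulVec A)^[k] x := by
  induction k with
  | zero => exact mpMulVec_mpId x
  | succ k ih => rw [mpPow, mpMulVec_mpMul, ih, Function.iterate_succ_apply']

theorem mpMulVec_mpStar (x : Fin n → EReal) :
    mpMulVec (mpStar A) x = ⨆ k, (mpMulVec A)^[k] x := by
  funext i
  simp only [← mpMulVec_mpPow, iSup_apply, mpMulVec, mpStar, ereal_iSup_add]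
  exact iSup_comm

theorem le_mpMulVec_mpStar (x : Fin n → EReal) : x ≤ mpMulVec (mpStar A) x := by
  rw [mpMulVec_mpStar]
  exact le_iSup (fun k => (mpMulVec A)^[k] x) 0

theorem mpMulVec_mpMulVec_mpStar_le (y : Fin n → EReal) :
    mpMulVec A (mpMulVec (mpStar A) y) ≤ mpMulVec (mpStar A) y := by
  simp only [mpMulVec_mpStar, mpMulVec_iSup, ← Function.iterate_succ_apply']
  exact iSup_le fun k => le_iSup (fun k => (mpMulVec A)^[k] y) (k + 1)

variable {A}

theorem mpMulVec_mpStar_eq_self {x : Fin n → EReal} (h : mpMulVec A x ≤ x) :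
    mpMulVec (mpStar A) x = x := by
  refine le_antisymm ?_ (le_mpMulVec_mpStar A x)
  rw [mpMulVec_mpStar]
  exact iSup_le fun k => (mpMulVec_mono A).antitone_iterate_of_map_le h k.zero_le

end KleeneStar

theorem le_iff_im_star_general {n : ℕ} (A : Matrix (Fin n) (Fin n) EReal) (x : Fin n → EReal) :
    mpMulVec A x ≤ x ↔ ∃ y : Fin n → EReal, x = mpMulVec (mpStar A) y := by
  constructor
  · intro h
    exact ⟨x, (mpMulVec_mpStar_eq_self h).symm⟩
  · rintro ⟨y, rfl⟩
    exact mpMulVec_mpMulVec_mpStar_le A y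

/-- if `A` has entries in `ℝ ∪ {-∞}` and all entries of `A*` are real, then
`A ⊗ x ≤ x ↔ x ∈ Im(A*)` for vectors `x` with entries in `ℝ ∪ {-∞}`. -/
theorem le_iff_im_star {n : ℕ} (A : Matrix (Fin n) (Fin n) EReal)
    (hA : ∀ i j, A i j ≠ ⊤)
    (hAstar : ∀ i j, ∃ r : ℝ, mpStar A i j = (r : EReal))
    (x : Fin n → EReal) (hx : ∀ i, x i ≠ ⊤) :
    mpMulVec A x ≤ x ↔
      ∃ y : Fin n → EReal, (∀ i, y i ≠ ⊤) ∧ x = mpMulVec (mpStar A) y := by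
  rw [le_iff_im_star_general]
  exact exists_congr fun y =>
    ⟨fun hy => ⟨fun i => ne_top_of_le_ne_top (hx i) (hy ▸ le_mpMulVec_mpStar A y i), hy⟩, And.right⟩
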